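/- Let n, q ∈ ℕ with q ≥ 2 and p = (p₁,…,p_{q−1}) ∈ ℕ₀^{q−1} with I := { i : p_i ≠ 0 } nonempty. For every N ∈ ℕ there is a constant C_N such that, uniformly in k ∈ ℤⁿ and l ∈ (ℤⁿ)^{2q} satisfying |k| > U(l) := 36 (Σ_{i=1, i≠q}^{2q−1} |l_i|)⁴, one has | ∏_{i=1}^{q−1} |k + l̃_i|^{p_i} − Σ_{α=(α_i)_{i∈I} ∈ ∏_{i∈I}{0,…,N}^{p_i}} binom(1/2,α) · P_α(k,l) / |k|^{2|α|₁ − |p|₁} | ≤ C_N |k|^{|p|₁ − (N+1)/2}. -/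

import Mathlib

noncomputable section

/-- Euclidean norm of an integer vector `k ∈ ℤⁿ`. -/
def znorm {n : ℕ} (k : Fin n → ℤ) : ℝ := Real.sqrt (∑ i, ((k i : ℝ)) ^ 2)

/-- `l̃_j = l₁ + ⋯ + l_j + l_{q+1} + ⋯ + l_{q+j}` for `l ∈ (ℤⁿ)^{2q}`, `1 ≤ j ≤ q`. -/
def ltilde {q n : ℕ} (l : Fin (2 * q) → Fin n → ℤ) (j : ℕ) : Fin n → ℤ :=
  ∑ t ∈ Finset.univ.filter
      (fun t : Fin (2 * q) => (t : ℕ) < j ∨ (q ≤ (t : ℕ) ∧ (t : ℕ) < q + j)), l t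

/-- Generalized binomial coefficient `binom(x, m) = x(x−1)⋯(x−m+1)/m!`. -/
def gbinomR (x : ℝ) (m : ℕ) : ℝ := (∏ j ∈ Finset.range m, (x - (j : ℝ))) / (Nat.factorial m : ℝ)

/-- The value `P_α(k,l) = ∏_{i∈I} ∏_{j=1}^{pᵢ} (2⟨k,l̃ᵢ⟩ + |l̃ᵢ|²)^{α_{i,j}}`. -/
def PalphaVal {q n : ℕ} (p : Fin (q - 1) → ℕ) (N : ℕ)
    (α : ∀ i : Fin (q - 1), Fin (p i) → Fin (N + 1))
    (k : Fin n → ℤ) (l : Fin (2 * q) → Fin n → ℤ) : ℝ :=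
  ∏ i : Fin (q - 1), ∏ j : Fin (p i),
    (2 * (∑ a, (k a : ℝ) * ((ltilde l ((i : ℕ) + 1)) a : ℝ)) +
      ∑ a, ((ltilde l ((i : ℕ) + 1) a : ℝ)) ^ 2) ^ ((α i j : ℕ))

/-- `U(l) = 36 (Σ_{i=1, i≠q}^{2q-1} |lᵢ|)⁴`. -/
def Ubound {q n : ℕ} (l : Fin (2 * q) → Fin n → ℤ) : ℝ :=
  36 * (∑ t ∈ Finset.univ.filter
      (fun t : Fin (2 * q) => (t : ℕ) + 1 < 2 * q ∧ (t : ℕ) + 1 ≠ q), znorm (l t)) ^ 4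

/-!
Write `‖k + v‖ = ‖k‖ (1 + x) ^ (1 / 2)` with `x = (2⟪k, v⟫ + ‖v‖²) / ‖k‖²`. If `‖v‖ ≤ t ‖k‖` then
`|x| ≤ 2 t + t²`, so for `t ≤ r < √2 - 1` the binomial series of each factor converges
uniformly, and truncating it after degree `N` costs `O(t ^ (N + 1))`. Multiplying the truncated
series out gives the sum over `α`, and replacing one factor of the product after another keeps the
error `O(t ^ (N + 1))`.
For `1 ≤ ‖k‖` the condition `36 ‖v‖⁴ ≤ ‖k‖` allows `t` of size `‖k‖ ^ (-3 / 4)`, and `1 ≤ ‖k‖` holds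
for nonzero integer vectors because their squared norm is a positive integer.
-/

theorem norm_prod_sub_prod_le {ι R : Type*} [NormedCommRing R] [NormOneClass R]
    (s : Finset ι) {f g : ι → R} {M ε : ℝ} (hf : ∀ i ∈ s, ‖f i‖ ≤ M) (hg : ∀ i ∈ s, ‖g i‖ ≤ M)
    (hfg : ∀ i ∈ s, ‖f i - g i‖ ≤ ε) :
    ‖∏ i ∈ s, f i - ∏ i ∈ s, g i‖ ≤ s.card * M ^ (s.card - 1) * ε := by
  classical
  induction s using Finset.induction_on with
  | empty => simp
  | insert a s ha ih =>
    simp only [Finset.forall_mem_insert] at hf hg hfg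
    have hM : 0 ≤ M := (norm_nonneg _).trans hf.1
    have hε : 0 ≤ ε := (norm_nonneg _).trans hfg.1
    have hprod : ‖∏ i ∈ s, f i‖ ≤ M ^ s.card :=
      (Finset.norm_prod_le s f).trans <|
        (Finset.prod_le_prod (fun _ _ => norm_nonneg _) hf.2).trans_eq (Finset.prod_const M)
    have hpow : M * (s.card * M ^ (s.card - 1)) = s.card * M ^ s.card := by
      rcases s.card.eq_zero_or_pos with h | h
      · simp [h]
      · rw [mul_left_comm, mul_pow_sub_one h.ne']
    rw [Finset.prod_insert ha, Finset.prod_insert ha, Finset.card_insert_of_notMem ha]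
    calc ‖f a * ∏ i ∈ s, f i - g a * ∏ i ∈ s, g i‖
        = ‖(f a - g a) * ∏ i ∈ s, f i + g a * (∏ i ∈ s, f i - ∏ i ∈ s, g i)‖ := by ring_nf
      _ ≤ ‖f a - g a‖ * ‖∏ i ∈ s, f i‖ + ‖g a‖ * ‖∏ i ∈ s, f i - ∏ i ∈ s, g i‖ :=
          (norm_add_le _ _).trans (add_le_add (norm_mul_le _ _) (norm_mul_le _ _))
      _ ≤ ε * M ^ s.card + M * (s.card * M ^ (s.card - 1) * ε) := by
          gcongr
          exacts [hfg.1, hg.1, ih hf.2 hg.2 hfg.2]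
      _ = (s.card + 1 : ℕ) * M ^ (s.card + 1 - 1) * ε := by
          rw [← mul_assoc, hpow, Nat.add_sub_cancel]
          push_cast
          ring

theorem prod_sum_pow_eq_sum_prod {ι κ R : Type*} [Fintype ι] [DecidableEq ι] [Fintype κ]
    [CommSemiring R] (p : ι → ℕ) (F : ι → κ → R) :
    ∏ i, (∑ m, F i m) ^ p i = ∑ α : ∀ i, Fin (p i) → κ, ∏ i, ∏ j, F i (α i j) := by
  simp_rw [Fintype.sum_pow, Finset.prod_univ_sum, Fintype.piFinset_univ]

theorem binomialSeries_partialSum_eq (a : ℝ) (n : ℕ) (x : ℝ) :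
    (binomialSeries ℝ a).partialSum n x = ∑ m : Fin n, Ring.choose a (m : ℕ) * x ^ (m : ℕ) := by
  simp only [FormalMultilinearSeries.partialSum, binomialSeries_apply, List.ofFn_const,
    List.prod_replicate, smul_eq_mul]
  exact (Fin.sum_univ_eq_sum_range (fun m => Ring.choose a m * x ^ m) n).symm

theorem exists_abs_one_add_rpow_sub_partialSum_le {ρ : ℝ} (hρ : ρ < 1) (a : ℝ) (n : ℕ) :
    ∃ C, 0 ≤ C ∧ ∀ x : ℝ, |x| ≤ ρ →
      |(1 + x) ^ a - (binomialSeries ℝ a).partialSum n x| ≤ C * |x| ^ n := by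
  obtain ⟨r, hr, hr1⟩ := exists_between (max_lt hρ zero_lt_one)
  lift r to NNReal using (le_max_right ρ 0).trans hr.le
  obtain ⟨b, ⟨hb, -⟩, C, hC, h⟩ :=
    (Real.one_add_rpow_hasFPowerSeriesOnBall_zero (a := a)).uniform_geometric_approx' (r' := r)
      (by exact_mod_cast hr1)
  refine ⟨C * (b / r) ^ n, by positivity, fun x hx => ?_⟩
  have hx_ball : x ∈ Metric.ball (0 : ℝ) r := by
    rw [mem_ball_zero_iff]
    exact hx.trans_lt ((le_max_left ρ 0).trans_lt hr)
  calc |(1 + x) ^ a - (binomialSeries ℝ a).partialSum n x|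
      ≤ C * (b * (|x| / r)) ^ n := by simpa using h x hx_ball n
    _ = C * (b / r) ^ n * |x| ^ n := by rw [mul_assoc C, ← mul_pow]; ring

theorem exists_abs_prod_one_add_rpow_sub_partialSum_le {ι : Type*} [Fintype ι] {ρ : ℝ}
    (hρ : ρ < 1) (a : ℝ) (n : ℕ) (p : ι → ℕ) :
    ∃ C, 0 ≤ C ∧ ∀ (x : ι → ℝ) (δ : ℝ), 0 ≤ δ → δ ≤ ρ → (∀ i, |x i| ≤ δ) →
      |∏ i, ((1 + x i) ^ a) ^ p i - ∏ i, (binomialSeries ℝ a).partialSum n (x i) ^ p i| ≤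
        C * δ ^ n := by
  -- At order `0` the partial sum is empty, so the estimate bounds `(1 + x) ^ a` itself.
  obtain ⟨B, hB, hbound⟩ := exists_abs_one_add_rpow_sub_partialSum_le hρ a 0
  obtain ⟨C, hC, happrox⟩ := exists_abs_one_add_rpow_sub_partialSum_le hρ a n
  set c := Fintype.card (Σ i, Fin (p i))
  refine ⟨c * (B + C) ^ (c - 1) * C, by positivity, fun x δ hδ hδρ hx => ?_⟩
  have hdiff (i : ι) : |(1 + x i) ^ a - (binomialSeries ℝ a).partialSum n (x i)| ≤ C * δ ^ n :=
    (happrox _ ((hx i).trans hδρ)).trans (by gcongr; exact hx i)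
  have hrpow (i : ι) : |(1 + x i) ^ a| ≤ B := by
    simpa [FormalMultilinearSeries.partialSum] using hbound (x i) ((hx i).trans hδρ)
  have hpartialSum (i : ι) : |(binomialSeries ℝ a).partialSum n (x i)| ≤ B + C :=
    calc |(binomialSeries ℝ a).partialSum n (x i)|
        ≤ |(1 + x i) ^ a| + |(1 + x i) ^ a - (binomialSeries ℝ a).partialSum n (x i)| := by
          simpa using abs_sub ((1 + x i) ^ a)
            ((1 + x i) ^ a - (binomialSeries ℝ a).partialSum n (x i))
      _ ≤ B + C * δ ^ n := add_le_add (hrpow i) (hdiff i)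
      _ ≤ B + C := by
          gcongr
          exact mul_le_of_le_one_right hC (pow_le_one₀ hδ (hδρ.trans hρ.le))
  have hsigma (f : ι → ℝ) : ∏ i, f i ^ p i = ∏ s : Σ i, Fin (p i), f s.1 := by
    simp [Fintype.prod_sigma]
  rw [hsigma, hsigma, mul_assoc]
  exact norm_prod_sub_prod_le (Finset.univ : Finset (Σ i, Fin (p i)))
    (f := fun s => (1 + x s.1) ^ a) (g := fun s => (binomialSeries ℝ a).partialSum n (x s.1))
    (fun s _ => (hrpow s.1).trans (le_add_of_nonneg_right hC)) (fun s _ => hpartialSum s.1)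
    (fun s _ => hdiff s.1)

section InnerProductSpace

variable {E : Type*} [NormedAddCommGroup E] [InnerProductSpace ℝ E]

/-- The relative increment `(‖k + v‖² - ‖k‖²) / ‖k‖²` of the squared norm, with the numerator
expanded into the base `2⟪k, v⟫ + ‖v‖²` of the powers in `P_α`. It is the variable of the binomial
series. -/
def relSqIncrement (k v : E) : ℝ := (2 * inner ℝ k v + ‖v‖ ^ 2) / ‖k‖ ^ 2

theorem norm_add_eq_norm_mul_rpow {k : E} (hk : k ≠ 0) (v : E) :
    ‖k + v‖ = ‖k‖ * (1 + relSqIncrement k v) ^ (1 / 2 : ℝ) := by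
  have hk' : ‖k‖ ≠ 0 := norm_ne_zero_iff.2 hk
  have hsq : ‖k + v‖ ^ 2 = ‖k‖ ^ 2 * (1 + relSqIncrement k v) := by
    rw [norm_add_sq_real, relSqIncrement]
    field_simp
    ring
  rw [← Real.sqrt_eq_rpow, ← Real.sqrt_sq (norm_nonneg (k + v)), hsq,
    Real.sqrt_mul (sq_nonneg _), Real.sqrt_sq (norm_nonneg k)]

theorem abs_relSqIncrement_le {k v : E} {t : ℝ} (ht : 0 ≤ t) (hv : ‖v‖ ≤ t * ‖k‖) :
    |relSqIncrement k v| ≤ 2 * t + t ^ 2 := by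
  have hnum : |2 * inner ℝ k v + ‖v‖ ^ 2| ≤ (2 * t + t ^ 2) * ‖k‖ ^ 2 :=
    calc |2 * inner ℝ k v + ‖v‖ ^ 2|
        ≤ 2 * |inner ℝ k v| + ‖v‖ ^ 2 :=
          (abs_add_le _ _).trans_eq (by rw [abs_mul, abs_two, abs_of_nonneg (sq_nonneg ‖v‖)])
      _ ≤ 2 * (‖k‖ * ‖v‖) + ‖v‖ ^ 2 := by gcongr; exact abs_real_inner_le_norm k v
      _ ≤ 2 * (‖k‖ * (t * ‖k‖)) + (t * ‖k‖) ^ 2 := by gcongr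
      _ = (2 * t + t ^ 2) * ‖k‖ ^ 2 := by ring
  rw [relSqIncrement, abs_div, abs_of_nonneg (sq_nonneg ‖k‖)]
  exact div_le_of_le_mul₀ (sq_nonneg _) (by positivity) hnum

variable {ι : Type*} [Fintype ι] [DecidableEq ι]

/-- The approximation `∑_α binom(1/2, α) P_α / ‖k‖^(2|α|₁ - |p|₁)` of `∏ i, ‖k + v i‖ ^ p i`, for
vectors `k`, `v i` of an inner product space. Indices `i` with `p i = 0` are kept: they contribute
empty products and a single empty tuple `α i`. -/
def prodNormExpansion (p : ι → ℕ) (N : ℕ) (k : E) (v : ι → E) : ℝ :=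
  ∑ α : ∀ i, Fin (p i) → Fin (N + 1),
    (∏ i, ∏ j, Ring.choose (1 / 2 : ℝ) (α i j : ℕ)) *
      (∏ i, ∏ j, (2 * inner ℝ k (v i) + ‖v i‖ ^ 2) ^ (α i j : ℕ)) /
        ‖k‖ ^ (((2 * ∑ i, ∑ j, (α i j : ℕ) : ℕ) : ℝ) - ((∑ i, p i : ℕ) : ℝ))

theorem prodNormExpansion_eq_prod_partialSum (p : ι → ℕ) (N : ℕ) {k : E} (hk : k ≠ 0)
    (v : ι → E) :
    prodNormExpansion p N k v =
      ‖k‖ ^ (∑ i, p i) *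
        ∏ i, (binomialSeries ℝ (1 / 2 : ℝ)).partialSum (N + 1) (relSqIncrement k (v i)) ^ p i := by
  have hk' : 0 < ‖k‖ := norm_pos_iff.2 hk
  simp only [binomialSeries_partialSum_eq, prod_sum_pow_eq_sum_prod, prodNormExpansion]
  rw [Finset.mul_sum]
  refine Finset.sum_congr rfl fun α _ => ?_
  rw [Real.rpow_sub hk', Real.rpow_natCast, Real.rpow_natCast, pow_mul]
  simp only [relSqIncrement, div_pow, Finset.prod_mul_distrib, Finset.prod_div_distrib,
    Finset.prod_pow_eq_pow_sum]
  field_simp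

theorem exists_abs_prod_norm_add_sub_expansion_le {r : ℝ} (hr : 2 * r + r ^ 2 < 1) (p : ι → ℕ)
    (N : ℕ) :
    ∃ C, 0 ≤ C ∧ ∀ (k : E) (v : ι → E) (t : ℝ), k ≠ 0 → 0 ≤ t → t ≤ r →
      (∀ i, ‖v i‖ ≤ t * ‖k‖) →
      |∏ i, ‖k + v i‖ ^ p i - prodNormExpansion p N k v| ≤
        C * ‖k‖ ^ (∑ i, p i) * t ^ (N + 1) := by
  obtain ⟨C, hC, h⟩ := exists_abs_prod_one_add_rpow_sub_partialSum_le hr (1 / 2) (N + 1) p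
  refine ⟨C * 3 ^ (N + 1), by positivity, fun k v t hk ht htr hv => ?_⟩
  have hprod : ∏ i, ‖k + v i‖ ^ p i =
      ‖k‖ ^ (∑ i, p i) * ∏ i, ((1 + relSqIncrement k (v i)) ^ (1 / 2 : ℝ)) ^ p i := by
    simp only [norm_add_eq_norm_mul_rpow hk, mul_pow, Finset.prod_mul_distrib,
      Finset.prod_pow_eq_pow_sum]
  have hδ : 2 * t + t ^ 2 ≤ 3 * t := by nlinarith
  rw [hprod, prodNormExpansion_eq_prod_partialSum p N hk, ← mul_sub, abs_mul,
    abs_of_nonneg (by positivity)]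
  calc _ ≤ ‖k‖ ^ (∑ i, p i) * (C * (2 * t + t ^ 2) ^ (N + 1)) := by
        gcongr
        exact h _ _ (by positivity) (by gcongr) fun i => abs_relSqIncrement_le ht (hv i)
    _ ≤ ‖k‖ ^ (∑ i, p i) * (C * (3 * t) ^ (N + 1)) := by gcongr
    _ = C * 3 ^ (N + 1) * ‖k‖ ^ (∑ i, p i) * t ^ (N + 1) := by ring

theorem prod_norm_expansion_general (p : ι → ℕ) (N : ℕ) :
    ∃ C, 0 ≤ C ∧ ∀ (k : E) (v : ι → E), 1 ≤ ‖k‖ → (∀ i, 36 * ‖v i‖ ^ 4 ≤ ‖k‖) →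
      |∏ i, ‖k + v i‖ ^ p i - prodNormExpansion p N k v| ≤
        C * ‖k‖ ^ (((∑ i, p i : ℕ) : ℝ) - 3 * ((N : ℝ) + 1) / 4) := by
  -- `r = 41 / 100` satisfies both `1 / 36 ≤ r ^ 4` and `2 * r + r ^ 2 < 1`.
  obtain ⟨C, hC, h⟩ := exists_abs_prod_norm_add_sub_expansion_le (E := E)
    (by norm_num : 2 * (41 / 100 : ℝ) + (41 / 100) ^ 2 < 1) p N
  refine ⟨C * (41 / 100) ^ (N + 1), by positivity, fun k v hk hv => ?_⟩
  have hk0 : 0 < ‖k‖ := zero_lt_one.trans_le hk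
  set s := ‖k‖ ^ (-(3 / 4) : ℝ) with hs
  have hs1 : s ≤ 1 := Real.rpow_le_one_of_one_le_of_nonpos hk (by norm_num)
  have hs_pow (m : ℕ) : s ^ m = ‖k‖ ^ (-(3 * m / 4) : ℝ) := by
    rw [hs, ← Real.rpow_natCast, ← Real.rpow_mul hk0.le]
    ring_nf
  have hs4 : (s * ‖k‖) ^ 4 = ‖k‖ := by
    rw [mul_pow, hs_pow, ← Real.rpow_natCast, ← Real.rpow_add hk0]
    norm_num
  have hvs (i : ι) : ‖v i‖ ≤ 41 / 100 * s * ‖k‖ := by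
    refine le_of_pow_le_pow_left₀ four_ne_zero (by positivity) ?_
    rw [mul_assoc, mul_pow, hs4]
    linarith [hv i]
  refine (h k v _ (norm_pos_iff.1 hk0) (by positivity) (by linarith) hvs).trans_eq ?_
  rw [mul_pow, hs_pow, sub_eq_add_neg, Real.rpow_add hk0, Real.rpow_natCast]
  push_cast
  ring

end InnerProductSpace

section IntegerVectors

variable {n q : ℕ}

/-- The inclusion `ℤⁿ → ℝⁿ`, under which `znorm` is the Euclidean norm. -/
def intVec (n : ℕ) : (Fin n → ℤ) →+ EuclideanSpace ℝ (Fin n) where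
  toFun k := WithLp.toLp 2 fun i => (k i : ℝ)
  map_zero' := by ext; simp
  map_add' _ _ := by ext; simp

theorem intVec_apply (k : Fin n → ℤ) (i : Fin n) : intVec n k i = k i := rfl

theorem norm_intVec (k : Fin n → ℤ) : ‖intVec n k‖ = znorm k := by
  simp [EuclideanSpace.norm_eq, znorm, intVec_apply]

theorem norm_intVec_sq (k : Fin n → ℤ) : ‖intVec n k‖ ^ 2 = ∑ i, (k i : ℝ) ^ 2 := by
  simp [EuclideanSpace.norm_sq_eq, intVec_apply]

theorem inner_intVec (k l : Fin n → ℤ) :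
    inner ℝ (intVec n k) (intVec n l) = ∑ i, (k i : ℝ) * (l i : ℝ) := by
  simp [PiLp.inner_apply, intVec_apply, mul_comm]

theorem one_le_znorm_of_pos {k : Fin n → ℤ} (hk : 0 < znorm k) : 1 ≤ znorm k := by
  have hpos : 0 < ∑ i, k i ^ 2 := by exact_mod_cast Real.sqrt_pos.1 hk
  exact Real.one_le_sqrt.2 (by exact_mod_cast hpos)

theorem znorm_sum_le {ι : Type*} (s : Finset ι) (f : ι → Fin n → ℤ) :
    znorm (∑ i ∈ s, f i) ≤ ∑ i ∈ s, znorm (f i) := by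
  simpa only [← map_sum, norm_intVec] using norm_sum_le s fun i => intVec n (f i)

theorem znorm_ltilde_pow_four_le_Ubound (l : Fin (2 * q) → Fin n → ℤ) {j : ℕ} (hj : j < q) :
    36 * znorm (ltilde l j) ^ 4 ≤ Ubound l := by
  have hnonneg (k : Fin n → ℤ) : 0 ≤ znorm k := Real.sqrt_nonneg _
  unfold Ubound
  gcongr
  · exact hnonneg _
  · refine (znorm_sum_le _ _).trans <|
      Finset.sum_le_sum_of_subset_of_nonneg (fun t => ?_) fun t _ _ => hnonneg _
    simp only [Finset.mem_filter, Finset.mem_univ, true_and]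
    omega

theorem choose_eq_gbinomR (x : ℝ) (m : ℕ) : Ring.choose x m = gbinomR x m := by
  have h : (descPochhammer ℤ m).smeval x = ∏ j ∈ Finset.range m, (x - (j : ℝ)) := by
    rw [← descPochhammer_eval_eq_prod_range, ← descPochhammer_map (Int.castRingHom ℝ),
      Polynomial.eval_map, ← Polynomial.aeval_eq_smeval, Polynomial.aeval_def]
    rfl
  rw [Ring.choose_eq_smul, gbinomR, h, smul_eq_mul, inv_mul_eq_div]

theorem prodNormExpansion_intVec_ltilde (p : Fin (q - 1) → ℕ) (N : ℕ) (k : Fin n → ℤ)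
    (l : Fin (2 * q) → Fin n → ℤ) :
    prodNormExpansion p N (intVec n k) (fun i => intVec n (ltilde l ((i : ℕ) + 1))) =
      ∑ α : (∀ i : Fin (q - 1), Fin (p i) → Fin (N + 1)),
        (∏ i : Fin (q - 1), ∏ j : Fin (p i), gbinomR (1 / 2) ((α i j : ℕ))) *
          PalphaVal p N α k l /
            znorm k ^ (((2 * ∑ i : Fin (q - 1), ∑ j : Fin (p i), ((α i j : ℕ)) : ℕ) : ℝ) -
              ((∑ i, p i : ℕ) : ℝ)) := by
  simp only [prodNormExpansion, PalphaVal, choose_eq_gbinomR, inner_intVec, norm_intVec_sq]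
  simp only [norm_intVec]

end IntegerVectors

/-- **Lemma.** For each `N ∈ ℕ` there is a constant `C_N` such that, uniformly in
`k ∈ ℤⁿ` and `l ∈ (ℤⁿ)^{2q}` with `|k| > U(l)`,
`| ∏_{i=1}^{q-1} |k+l̃ᵢ|^{pᵢ} − Σ_{α ∈ ∏_{i∈I}{0,…,N}^{pᵢ}} binom(1/2,α) P_α(k,l)/|k|^{2|α|₁-|p|₁} |
  ≤ C_N |k|^{|p|₁ − (N+1)/2}`. -/
theorem prod_norm_expansion (n q : ℕ) (hn : 0 < n) (hq : 2 ≤ q)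
    (p : Fin (q - 1) → ℕ) (hp : ∃ i, p i ≠ 0) (N : ℕ) (hN : 0 < N) :
    ∃ C : ℝ, ∀ (k : Fin n → ℤ) (l : Fin (2 * q) → Fin n → ℤ),
      Ubound l < znorm k →
      |(∏ i : Fin (q - 1), znorm (k + ltilde l ((i : ℕ) + 1)) ^ (p i)) -
          ∑ α : (∀ i : Fin (q - 1), Fin (p i) → Fin (N + 1)),
            (∏ i : Fin (q - 1), ∏ j : Fin (p i), gbinomR (1 / 2) ((α i j : ℕ))) *
              PalphaVal p N α k l /
                znorm k ^ (((2 * ∑ i : Fin (q - 1), ∑ j : Fin (p i), ((α i j : ℕ)) : ℕ) : ℝ) -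
                  ((∑ i, p i : ℕ) : ℝ))| ≤
        C * znorm k ^ ((((∑ i, p i : ℕ)) : ℝ) - ((N : ℝ) + 1) / 2) := by
  obtain ⟨C, hC, h⟩ := prod_norm_expansion_general (E := EuclideanSpace ℝ (Fin n)) p N
  refine ⟨C, fun k l hkl => ?_⟩
  have hU : 0 ≤ Ubound l := by unfold Ubound; positivity
  have hk : 1 ≤ znorm k := one_le_znorm_of_pos (hU.trans_lt hkl)
  have hl (i : Fin (q - 1)) : 36 * znorm (ltilde l ((i : ℕ) + 1)) ^ 4 ≤ znorm k :=
    (znorm_ltilde_pow_four_le_Ubound l (by omega)).trans hkl.le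
  have hexpansion := h (intVec n k) (fun i => intVec n (ltilde l ((i : ℕ) + 1)))
    (by rwa [norm_intVec]) (fun i => by simpa only [norm_intVec] using hl i)
  simp only [prodNormExpansion_intVec_ltilde, ← map_add, norm_intVec] at hexpansion
  refine hexpansion.trans ?_
  gcongr _ * _ ^ ?_
  linarith [N.cast_nonneg (α := ℝ)]

end
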